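/- arXiv:2508.19066 — 3 statements merged into one kernel-verified Lean document; each statement's English description precedes it below -/
import Mathlib

section
/- Let R be a commutative ring. For a doubly infinite array B = (b_{i,j}) with i ∈ ℤ and 1 ≤ j ≤ n and entries in R, and for s ∈ ℤ, let B(s) denote the n×n matrix whose rows are the rows s, s+1, …, s+n−1 of B. Then the assignment B ↦ (B(s))_{s∈ℤ} is a bijection from the set of arrays B over R satisfying det B(s) = 1 for every s ∈ ℤ onto the set of (SL(n), c)-bands over R. -/
/-- Steinberg's cross-section `A(R)` for `SL(n)` and the standard Coxeter element. -/
def IsSteinbergA {n : ℕ} {R : Type*} [CommRing R] (m : Matrix (Fin n) (Fin n) R) : Prop :=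
  (∀ i j : Fin n, (i : ℕ) = 0 → (j : ℕ) = n - 1 → m i j = (-1) ^ (n - 1)) ∧
  (∀ i j : Fin n, (i : ℕ) = (j : ℕ) + 1 → m i j = 1) ∧
  (∀ i j : Fin n, (i : ℕ) ≠ 0 → (i : ℕ) ≠ (j : ℕ) + 1 → m i j = 0)

/-- The assignment `B ↦ (B(s))_{s ∈ ℤ}` sending a doubly infinite `ℤ × n` array all of whose
`n × n` windows of consecutive rows have determinant `1` to the corresponding sequence of
elements of `SL(n, R)`. -/
def arrayToSeq (n : ℕ) (R : Type*) [CommRing R]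
    (B : {B : ℤ → Fin n → R //
      ∀ s : ℤ, (Matrix.of fun i j : Fin n => B (s + (i : ℕ)) j).det = 1}) :
    ℤ → Matrix.SpecialLinearGroup (Fin n) R :=
  fun s => ⟨Matrix.of fun i j : Fin n => B.1 (s + (i : ℕ)) j, B.2 s⟩

/-!
A matrix `M` of determinant `1` lies in `A(R)` exactly when row `i + 1` of `M` is the `i`-th
standard basis vector for every `i`: the determinant then forces the corner entry to be
`(-1) ^ (n - 1)`. For invertible `h`, this shape of `M` says that row `i + 1` of `M * h` is row `i`
of `h`. Taking `M = g s * (g (s + 1))⁻¹`, the band condition on `g` says that row `i + 1` of `g s`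
is row `i` of `g (s + 1)`, i.e. that the `g s` are the windows of the array of their top rows.
-/

section Windows

variable {T α : Type*} [AddMonoidWithOne T] {m : ℕ}

theorem add_val_succ (t : T) (i : Fin m) :
    t + (i.succ : ℕ) = t + 1 + (i.castSucc : ℕ) := by
  rw [Fin.val_succ, Fin.val_castSucc, add_assoc, Nat.cast_succ, Nat.cast_add_one_comm]

theorem eq_apply_add_zero_of_succ_eq_castSucc {f : T → Fin (m + 1) → α}
    (hf : ∀ (t : T) (i : Fin m), f t i.succ = f (t + 1) i.castSucc) (t : T) (i : Fin (m + 1)) :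
    f t i = f (t + (i : ℕ)) 0 := by
  induction i using Fin.induction generalizing t with
  | zero => simp
  | succ i ih => rw [hf, ih, add_val_succ]

theorem exists_eq_apply_add_iff_succ_eq_castSucc {f : T → Fin (m + 1) → α} :
    (∃ b : T → α, ∀ t i, f t i = b (t + (i : ℕ))) ↔
      ∀ (t : T) (i : Fin m), f t i.succ = f (t + 1) i.castSucc := by
  constructor
  · rintro ⟨b, hb⟩ t i
    rw [hb, hb, add_val_succ]
  · exact fun hf => ⟨fun t => f t 0, eq_apply_add_zero_of_succ_eq_castSucc hf⟩

end Windows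

section CrossSection

theorem row_mul_eq_row_iff {k l R : Type*} [Fintype k] [DecidableEq k] [Semiring R]
    {M : Matrix l k R} {B : Matrix k k R} (hB : IsUnit B) {i : l} {j : k} :
    (M * B).row i = B.row j ↔ M.row i = Pi.single j 1 := by
  have row_mul : (M * B).row i = Matrix.vecMul (M.row i) B := Matrix.mul_apply_eq_vecMul M B i
  rw [row_mul, ← Matrix.single_one_vecMul j B, (Matrix.vecMul_injective_of_isUnit hB).eq_iff]

variable {R : Type*} [CommRing R] {m : ℕ}

theorem det_eq_of_row_succ_eq_single {M : Matrix (Fin (m + 1)) (Fin (m + 1)) R}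
    (hM : ∀ i : Fin m, M.row i.succ = Pi.single i.castSucc 1) :
    M.det = (-1) ^ m * M 0 (Fin.last m) := by
  have succ_apply (i : Fin m) (j : Fin (m + 1)) :
      M i.succ j = (Pi.single i.castSucc 1 : Fin (m + 1) → R) j := congrFun (hM i) j
  have minor_eq_one : M.submatrix (Fin.succAbove 0) (Fin.last m).succAbove = 1 := by
    ext i j
    simp [succ_apply, Matrix.one_apply, Pi.single_apply, eq_comm]
  have last_eq_zero (i : Fin m) : M i.succ (Fin.last m) = 0 := by
    rw [succ_apply, Pi.single_eq_of_ne (Fin.castSucc_lt_last i).ne']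
  rw [Matrix.det_succ_column M (Fin.last m), Fin.sum_univ_succ, minor_eq_one]
  simp [last_eq_zero]

theorem isSteinbergA_iff_corner_and_row_succ {M : Matrix (Fin (m + 1)) (Fin (m + 1)) R} :
    IsSteinbergA M ↔ M 0 (Fin.last m) = (-1) ^ m ∧
      ∀ i : Fin m, M.row i.succ = Pi.single i.castSucc 1 := by
  constructor
  · rintro ⟨corner, subdiagonal, off_subdiagonal⟩
    refine ⟨corner 0 (Fin.last m) rfl rfl, fun i => funext fun j => ?_⟩
    rcases eq_or_ne j i.castSucc with rfl | hj
    · simpa using subdiagonal i.succ i.castSucc rfl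
    · rw [Pi.single_eq_of_ne hj]
      refine off_subdiagonal i.succ j i.val.succ_ne_zero fun hij => hj ?_
      exact Fin.ext (Nat.succ.inj hij).symm
  · rintro ⟨corner, rows⟩
    refine ⟨fun i j hi hj => ?_, fun i j hij => ?_, fun i j hi hij => ?_⟩
    · obtain rfl : i = 0 := Fin.ext hi
      obtain rfl : j = Fin.last m := Fin.ext hj
      exact corner
    · obtain ⟨i, rfl⟩ := Fin.exists_succ_eq.2 (show i ≠ 0 by rintro rfl; simp at hij)
      obtain rfl : j = i.castSucc := Fin.ext (Nat.succ.inj hij).symm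
      rw [← M.row_apply, rows, Pi.single_eq_same]
    · obtain ⟨i, rfl⟩ := Fin.exists_succ_eq.2 (show i ≠ 0 by rintro rfl; exact hi rfl)
      rw [← M.row_apply, rows, Pi.single_eq_of_ne]
      rintro rfl
      exact hij rfl

theorem isSteinbergA_iff_det_and_row_succ {M : Matrix (Fin (m + 1)) (Fin (m + 1)) R} :
    IsSteinbergA M ↔ M.det = 1 ∧ ∀ i : Fin m, M.row i.succ = Pi.single i.castSucc 1 := by
  rw [isSteinbergA_iff_corner_and_row_succ]
  refine and_congr_left fun hM => ?_
  have sign_mul_self : (-1 : R) ^ m * (-1) ^ m = 1 := by simp [← mul_pow]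
  rw [det_eq_of_row_succ_eq_single hM, ← (isUnit_one.neg.pow m).mul_right_inj, sign_mul_self]

theorem isSteinbergA_mul_inv_iff {g h : Matrix.SpecialLinearGroup (Fin (m + 1)) R} :
    IsSteinbergA (g * h⁻¹).val ↔ ∀ i : Fin m, g.val.row i.succ = h.val.row i.castSucc := by
  have isUnit_h : IsUnit h.val := by simp [Matrix.isUnit_iff_isUnit_det]
  simp only [isSteinbergA_iff_det_and_row_succ, Matrix.SpecialLinearGroup.det_coe, true_and,
    ← row_mul_eq_row_iff isUnit_h, ← Matrix.SpecialLinearGroup.coe_mul, inv_mul_cancel_right]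

end CrossSection

section Arrays

variable {n : ℕ} {R : Type*} [CommRing R]

theorem arrayToSeq_injective : Function.Injective (arrayToSeq n R) := by
  intro B C hBC
  ext s j
  have top_row := congrArg (fun g => (g s).val ⟨0, j.pos⟩ j) hBC
  simpa [arrayToSeq] using top_row

theorem mem_range_arrayToSeq_iff {g : ℤ → Matrix.SpecialLinearGroup (Fin n) R} :
    g ∈ Set.range (arrayToSeq n R) ↔
      ∃ b : ℤ → Fin n → R, ∀ s i, (g s).val.row i = b (s + (i : ℕ)) := by
  constructor
  · rintro ⟨B, rfl⟩
    exact ⟨B.1, fun _ _ => rfl⟩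
  · rintro ⟨b, hb⟩
    have window_eq (s : ℤ) : (Matrix.of fun i j : Fin n => b (s + (i : ℕ)) j) = (g s).val :=
      Matrix.ext fun i j => congrFun (hb s i).symm j
    exact ⟨⟨b, fun s => by rw [window_eq, (g s).det_coe]⟩,
      funext fun s => Subtype.ext (window_eq s)⟩

end Arrays

/-- the assignment `B ↦ (B(s))_{s ∈ ℤ}` is a bijection from the set of arrays
over `R` with all `n × n` windows of determinant `1` onto the set of `(SL(n), c)`-bands
over `R`. -/
theorem stmt_7 (n : ℕ) (hn : 2 ≤ n) (R : Type*) [CommRing R] :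
    Function.Injective (arrayToSeq n R) ∧
    Set.range (arrayToSeq n R) =
      {g : ℤ → Matrix.SpecialLinearGroup (Fin n) R | ∀ s : ℤ,
        IsSteinbergA
          ((g s * (g (s + 1))⁻¹ : Matrix.SpecialLinearGroup (Fin n) R) :
            Matrix (Fin n) (Fin n) R)} := by
  obtain ⟨m, rfl⟩ : ∃ m, n = m + 1 := ⟨n - 1, by omega⟩
  refine ⟨arrayToSeq_injective, Set.ext fun g => ?_⟩
  simp only [Set.mem_ofPred_eq, isSteinbergA_mul_inv_iff]
  exact mem_range_arrayToSeq_iff.trans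
    (exists_eq_apply_add_iff_succ_eq_castSucc (f := fun s => (g s).val.row))
end

section
/- Let R be a commutative ℂ-algebra. The map U(R)^ℤ × A(R)^ℤ → M(R)^ℤ sending a pair of sequences (u, a) to the sequence s ↦ u(s)·a(s)·u(s+1)⁻¹ is a bijection. -/
/-- Upper unitriangular `n × n` matrices: the group `U(R)`. -/
def IsUniUpper {n : ℕ} {R : Type*} [CommRing R] (u : Matrix (Fin n) (Fin n) R) : Prop :=
  (∀ i : Fin n, u i i = 1) ∧ ∀ i j : Fin n, (j : ℕ) < (i : ℕ) → u i j = 0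

/-- The `R`-points of the double coset `M = U·c̄·U` of `SL(n)`. -/
def IsSteinbergM {n : ℕ} {R : Type*} [CommRing R] (m : Matrix (Fin n) (Fin n) R) : Prop :=
  m.det = 1 ∧
  (∀ i j : Fin n, (i : ℕ) = (j : ℕ) + 1 → m i j = 1) ∧
  (∀ i j : Fin n, (j : ℕ) + 1 < (i : ℕ) → m i j = 0)

/-!
Put `v s = (u s)⁻¹`, so that the equation `m s = u s * a s * (u (s + 1))⁻¹` becomes
`v s * m s = a s * v (s + 1)`. All rows of `a s` but the top one are standard basis vectors, so it
says that row `i` of `v (s + 1)` is row `i + 1` of `v s * m s`, for all `i` but the last one, and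
that the top row of `a s` is determined by `v`. The last row of a unitriangular matrix being fixed,
these relations compute all rows of `v`, from the bottom up and without any choice; and since `m s`
has ones on its subdiagonal and zeros below it, the matrices so obtained are unitriangular.
The corner entry of `a s` then comes out right because every determinant involved is `1`.
-/

section

open Matrix

section LeadingOne

variable {R : Type*} [Semiring R] {k l : Type*} [LinearOrder k] [LinearOrder l]

/-- The row vector `w` has the entry `1` in position `i`, preceded by zeros only. Unitriangularity
and the shape of `M` both say where the rows of a matrix have their leading ones. -/
def HasLeadingOne (w : l → R) (i : l) : Prop :=
  w i = 1 ∧ ∀ j < i, w j = 0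

lemma hasLeadingOne_single (i : l) : HasLeadingOne (Pi.single i 1 : l → R) i :=
  ⟨Pi.single_eq_same i 1, fun _ hj => Pi.single_eq_of_ne hj.ne 1⟩

lemma HasLeadingOne.vecMul [Fintype k] {w : k → R} {m : Matrix k l R} {i : k} {j : l}
    (hw : HasLeadingOne w i) (hm : HasLeadingOne (m i) j)
    (hbelow : ∀ i' > i, ∀ j' ≤ j, m i' j' = 0) : HasLeadingOne (w ᵥ* m) j := by
  have apply_eq : ∀ j' ≤ j, (w ᵥ* m) j' = m i j' := fun j' hj' => by
    rw [Matrix.vecMul, dotProduct, Fintype.sum_eq_single i, hw.1, one_mul]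
    intro i' hi'
    rcases hi'.lt_or_gt with hlt | hgt
    · rw [hw.2 i' hlt, zero_mul]
    · rw [hbelow i' hgt j' hj', mul_zero]
  exact ⟨(apply_eq j le_rfl).trans hm.1, fun j' hj' => (apply_eq j' hj'.le).trans (hm.2 j' hj')⟩

end LeadingOne

variable {R : Type*} [CommRing R] {n : ℕ}

lemma isUniUpper_iff_hasLeadingOne {u : Matrix (Fin n) (Fin n) R} :
    IsUniUpper u ↔ ∀ i, HasLeadingOne (u i) i :=
  forall_and.symm

namespace IsUniUpper

variable {u : Matrix (Fin n) (Fin n) R}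

lemma isUpperTriangular (hu : IsUniUpper u) : u.IsUpperTriangular :=
  fun i j hij => hu.2 i j hij

lemma det_eq_one (hu : IsUniUpper u) : u.det = 1 := by
  rw [det_of_isUpperTriangular hu.isUpperTriangular]
  exact Finset.prod_eq_one fun i _ => hu.1 i

lemma isUnit_det (hu : IsUniUpper u) : IsUnit u.det :=
  hu.det_eq_one ▸ isUnit_one

lemma inv (hu : IsUniUpper u) : IsUniUpper u⁻¹ := by
  have := invertibleOfIsUnitDet u hu.isUnit_det
  have upper_inv : u⁻¹.IsUpperTriangular :=
    blockTriangular_inv_of_blockTriangular hu.isUpperTriangular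
  refine ⟨fun i => ?_, fun i j hij => upper_inv hij⟩
  calc u⁻¹ i i = (u * u⁻¹) i i := by
        rw [mul_apply, Fintype.sum_eq_single i, hu.1, one_mul]
        intro j hj
        rcases hj.lt_or_gt with hlt | hgt
        · rw [hu.2 i j hlt, zero_mul]
        · rw [upper_inv hgt, mul_zero]
    _ = 1 := by rw [mul_nonsing_inv u hu.isUnit_det, one_apply_eq]

end IsUniUpper

section UnitHessenberg

variable {m u : Matrix (Fin (n + 1)) (Fin (n + 1)) R} {w : Fin (n + 1) → R}

/-- A Hessenberg matrix whose subdiagonal entries are all `1`: the shape of the elements of `M`,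
without the condition on the determinant. -/
def IsUnitHessenberg (m : Matrix (Fin (n + 1)) (Fin (n + 1)) R) : Prop :=
  ∀ i : Fin n, HasLeadingOne (m i.succ) i.castSucc

lemma isSteinbergM_iff : IsSteinbergM m ↔ m.det = 1 ∧ IsUnitHessenberg m := by
  refine and_congr_right fun _ => ⟨fun h i => ⟨h.1 _ _ (by simp), fun j hj => ?_⟩, fun h => ?_⟩
  · exact h.2 _ _ (by simpa [Fin.lt_def] using hj)
  · constructor <;> intro i j hij
    all_goals
      obtain ⟨i, rfl⟩ := Fin.exists_succ_eq.2 (show i ≠ 0 by rintro rfl; simp at hij)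
    · obtain rfl : j = i.castSucc := by ext; simpa using hij.symm
      exact (h i).1
    · exact (h i).2 j (by simpa [Fin.lt_def] using hij)

lemma HasLeadingOne.vecMul_isUniUpper {i : Fin (n + 1)} (hw : HasLeadingOne w i)
    (hu : IsUniUpper u) : HasLeadingOne (w ᵥ* u) i :=
  hw.vecMul (isUniUpper_iff_hasLeadingOne.1 hu i) fun i' hi' j hj => hu.2 i' j (hj.trans_lt hi')

lemma HasLeadingOne.vecMul_isUnitHessenberg {i : Fin n} (hw : HasLeadingOne w i.succ)
    (hm : IsUnitHessenberg m) : HasLeadingOne (w ᵥ* m) i.castSucc := by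
  refine hw.vecMul (hm i) fun i' hi' j hj => ?_
  obtain ⟨i', rfl⟩ := Fin.exists_succ_eq.2 (Fin.ne_zero_of_lt hi')
  exact (hm i').2 j (hj.trans_lt (Fin.castSucc_lt_castSucc_iff.2 (Fin.succ_lt_succ_iff.1 hi')))

lemma IsUnitHessenberg.isUniUpper_mul (hm : IsUnitHessenberg m) (hu : IsUniUpper u) :
    IsUnitHessenberg (u * m) :=
  fun i => (isUniUpper_iff_hasLeadingOne.1 hu i.succ).vecMul_isUnitHessenberg hm

lemma IsUnitHessenberg.mul_isUniUpper (hm : IsUnitHessenberg m) (hu : IsUniUpper u) :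
    IsUnitHessenberg (m * u) :=
  fun i => (hm i).vecMul_isUniUpper hu

end UnitHessenberg

section CrossSection

variable {a m u v : Matrix (Fin (n + 1)) (Fin (n + 1)) R}

lemma det_of_forall_succ_eq_single (ha : ∀ i : Fin n, a i.succ = Pi.single i.castSucc 1) :
    a.det = (-1) ^ n * a 0 (Fin.last n) := by
  have minor_eq_one : a.submatrix (Fin.succAbove 0) (Fin.last n).succAbove = 1 := by
    ext i j
    simp [ha, Pi.single_apply, one_apply, eq_comm]
  rw [det_succ_column a (Fin.last n), Fin.sum_univ_succ, minor_eq_one, Finset.sum_eq_zero]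
  · simp
  · intro i _
    simp [ha, (Fin.castSucc_lt_last i).ne']

lemma isSteinbergA_iff_apply_last :
    IsSteinbergA a ↔
      a 0 (Fin.last n) = (-1) ^ n ∧ ∀ i : Fin n, a i.succ = Pi.single i.castSucc 1 := by
  refine ⟨fun h => ⟨h.1 _ _ rfl rfl, fun i => funext fun j => ?_⟩, fun h => ⟨?_, ?_, ?_⟩⟩
  · rcases eq_or_ne j i.castSucc with rfl | hj
    · rw [Pi.single_eq_same, h.2.1 _ _ (by simp)]
    · rw [Pi.single_eq_of_ne hj, h.2.2 _ _ (by simp)]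
      simpa [Fin.ext_iff, eq_comm] using hj
  · intro i j hi hj
    obtain rfl : i = 0 := Fin.ext hi
    obtain rfl : j = Fin.last n := Fin.ext hj
    exact h.1
  all_goals
    intro i j hi
    obtain ⟨i, rfl⟩ := Fin.exists_succ_eq.2 (show i ≠ 0 by rintro rfl; simp at hi)
  · obtain rfl : j = i.castSucc := by ext; simpa using hi.symm
    rw [h.2, Pi.single_eq_same]
  · intro hij
    rw [h.2, Pi.single_eq_of_ne]
    simpa [Fin.ext_iff, eq_comm] using hij

lemma isSteinbergA_iff_det :
    IsSteinbergA a ↔ a.det = 1 ∧ ∀ i : Fin n, a i.succ = Pi.single i.castSucc 1 := by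
  rw [isSteinbergA_iff_apply_last]
  refine and_congr_left fun ha => ?_
  have sign_mul_self : (-1 : R) ^ n * (-1) ^ n = 1 := by simp [← mul_pow]
  rw [det_of_forall_succ_eq_single ha]
  exact ⟨fun h => by rw [h, sign_mul_self], fun h => by
    linear_combination (-1) ^ n * h - a 0 (Fin.last n) * sign_mul_self⟩

lemma IsSteinbergA.isUnitHessenberg (ha : IsSteinbergA a) : IsUnitHessenberg a := fun i => by
  rw [(isSteinbergA_iff_det.1 ha).2 i]
  exact hasLeadingOne_single _

lemma IsSteinbergA.isSteinbergM_mul_mul (ha : IsSteinbergA a) (hu : IsUniUpper u)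
    (hv : IsUniUpper v) : IsSteinbergM (u * a * v) := by
  refine isSteinbergM_iff.2 ⟨?_, (ha.isUnitHessenberg.isUniUpper_mul hu).mul_isUniUpper hv⟩
  simp only [det_mul, hu.det_eq_one, (isSteinbergA_iff_det.1 ha).1, hv.det_eq_one, mul_one]

lemma isSteinbergA_mul_mul_inv_iff (hm : m.det = 1) (hu : IsUniUpper u) (hv : IsUniUpper v) :
    IsSteinbergA (u * m * v⁻¹) ↔ ∀ i : Fin n, v i.castSucc = (u * m) i.succ := by
  have det_eq_one : (u * m * v⁻¹).det = 1 := by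
    simp [hm, hu.det_eq_one, hv.inv.det_eq_one]
  rw [isSteinbergA_iff_det, and_iff_right det_eq_one]
  refine forall_congr' fun i => ⟨fun h => ?_, fun h => ?_⟩
  · calc v i.castSucc = Pi.single i.castSucc 1 ᵥ* v := (single_one_vecMul _ _).symm
      _ = (u * m * v⁻¹ * v) i.succ := by rw [← h, ← mul_apply_eq_vecMul]
      _ = (u * m) i.succ := by rw [nonsing_inv_mul_cancel_right _ _ hv.isUnit_det]
  · calc (u * m * v⁻¹) i.succ = (v * v⁻¹) i.castSucc := by
          rw [mul_apply_eq_vecMul, ← h, ← mul_apply_eq_vecMul]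
      _ = Pi.single i.castSucc 1 := by
          rw [mul_nonsing_inv _ hv.isUnit_det]
          ext j
          simp [one_apply, Pi.single_apply, eq_comm]

end CrossSection

section Gauge

variable {ι : Type*} {σ : Equiv.Perm ι} {m v : ι → Matrix (Fin (n + 1)) (Fin (n + 1)) R}

/-- The sequence `v` of unitriangular matrices for which every `v s * m s * (v (σ s))⁻¹` lies in
the cross-section, computed row by row starting from the last one. -/
def steinbergGauge (σ : Equiv.Perm ι) (m : ι → Matrix (Fin (n + 1)) (Fin (n + 1)) R) (s : ι) :
    Matrix (Fin (n + 1)) (Fin (n + 1)) R :=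
  Matrix.of fun i => Fin.reverseInduction (motive := fun _ => ι → Fin (n + 1) → R)
    (fun _ => Pi.single (Fin.last n) 1) (fun _ w t => w (σ.symm t) ᵥ* m (σ.symm t)) i s

lemma steinbergGauge_last (s : ι) :
    steinbergGauge σ m s (Fin.last n) = Pi.single (Fin.last n) 1 := by
  ext j
  simp [steinbergGauge]

lemma steinbergGauge_castSucc (s : ι) (i : Fin n) :
    steinbergGauge σ m (σ s) i.castSucc = (steinbergGauge σ m s * m s) i.succ := by
  ext j
  simp [steinbergGauge, mul_apply, Matrix.vecMul, dotProduct]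

lemma isUniUpper_steinbergGauge (hm : ∀ s, IsUnitHessenberg (m s)) (s : ι) :
    IsUniUpper (steinbergGauge σ m s) := by
  refine isUniUpper_iff_hasLeadingOne.2 fun i => ?_
  induction i using Fin.reverseInduction generalizing s with
  | last => exact steinbergGauge_last (σ := σ) (m := m) s ▸ hasLeadingOne_single _
  | cast i ih =>
    obtain ⟨s, rfl⟩ := σ.surjective s
    rw [steinbergGauge_castSucc]
    exact (ih s).vecMul_isUnitHessenberg (hm s)

lemma isSteinbergA_steinbergGauge (hm : ∀ s, IsSteinbergM (m s)) (s : ι) :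
    IsSteinbergA (steinbergGauge σ m s * m s * (steinbergGauge σ m (σ s))⁻¹) :=
  have gauge_uni := isUniUpper_steinbergGauge fun s => (isSteinbergM_iff.1 (hm s)).2
  (isSteinbergA_mul_mul_inv_iff (hm s).1 (gauge_uni s) (gauge_uni (σ s))).2
    (steinbergGauge_castSucc s)

lemma eq_steinbergGauge (hm : ∀ s, (m s).det = 1) (hv : ∀ s, IsUniUpper (v s))
    (ha : ∀ s, IsSteinbergA (v s * m s * (v (σ s))⁻¹)) : v = steinbergGauge σ m := by
  suffices ∀ i s, v s i = steinbergGauge σ m s i from funext fun s => funext fun i => this i s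
  intro i
  induction i using Fin.reverseInduction with
  | last =>
    intro s
    rw [steinbergGauge_last]
    ext j
    rcases (Fin.le_last j).eq_or_lt with rfl | hj
    · rw [(hv s).1, Pi.single_eq_same]
    · rw [(hv s).2 _ _ hj, Pi.single_eq_of_ne hj.ne]
  | cast i ih =>
    intro s
    obtain ⟨s, rfl⟩ := σ.surjective s
    rw [steinbergGauge_castSucc, mul_apply_eq_vecMul, ← ih s, ← mul_apply_eq_vecMul]
    exact (isSteinbergA_mul_mul_inv_iff (hm s) (hv s) (hv (σ s))).1 (ha s) i

lemma steinbergGauge_mul_mul_inv {u a : ι → Matrix (Fin (n + 1)) (Fin (n + 1)) R}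
    (hu : ∀ s, IsUniUpper (u s)) (ha : ∀ s, IsSteinbergA (a s)) :
    steinbergGauge σ (fun s => u s * a s * (u (σ s))⁻¹) = fun s => (u s)⁻¹ := by
  refine (eq_steinbergGauge (fun s => ?_) (fun s => (hu s).inv) fun s => ?_).symm
  · exact ((ha s).isSteinbergM_mul_mul (hu s) (hu (σ s)).inv).1
  · simpa [Matrix.mul_assoc, (hu _).isUnit_det] using ha s

end Gauge

end

theorem stmt_10_general (n : ℕ) (R : Type*) [CommRing R] {ι : Type*} (σ : Equiv.Perm ι) :
    Set.BijOn
      (fun p : (ι → Matrix (Fin (n + 1)) (Fin (n + 1)) R) ×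
          (ι → Matrix (Fin (n + 1)) (Fin (n + 1)) R) =>
        fun s : ι => p.1 s * p.2 s * (p.1 (σ s))⁻¹)
      ({u | ∀ s : ι, IsUniUpper (u s)} ×ˢ {a | ∀ s : ι, IsSteinbergA (a s)})
      {m | ∀ s : ι, IsSteinbergM (m s)} := by
  have gauge_uni : ∀ m : ι → Matrix (Fin (n + 1)) (Fin (n + 1)) R, (∀ s, IsSteinbergM (m s)) →
      ∀ s, IsUniUpper (steinbergGauge σ m s) :=
    fun m hm => isUniUpper_steinbergGauge fun s => (isSteinbergM_iff.1 (hm s)).2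
  refine Set.InvOn.bijOn (f' := fun m => (fun s => (steinbergGauge σ m s)⁻¹,
    fun s => steinbergGauge σ m s * m s * (steinbergGauge σ m (σ s))⁻¹)) ⟨?_, ?_⟩ ?_ ?_
  · rintro ⟨u, a⟩ ⟨hu, ha⟩
    simp only [steinbergGauge_mul_mul_inv hu ha]
    ext s : 2 <;> simp [Matrix.mul_assoc, (hu _).isUnit_det]
  · intro m hm
    funext s
    simp [Matrix.mul_assoc, (gauge_uni m hm _).isUnit_det]
  · exact fun p hp s => (hp.2 s).isSteinbergM_mul_mul (hp.1 s) (hp.1 (σ s)).inv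
  · exact fun m hm => ⟨fun s => (gauge_uni m hm s).inv, isSteinbergA_steinbergGauge hm⟩

/-- the map `U(R)^ℤ × A(R)^ℤ → M(R)^ℤ` sending `(u, a)` to the sequence
`s ↦ u(s)·a(s)·u(s+1)⁻¹` is a bijection. -/
theorem stmt_10 (n : ℕ) (hn : 2 ≤ n) (R : Type*) [CommRing R] [Algebra ℂ R] :
    Set.BijOn
      (fun p : (ℤ → Matrix (Fin n) (Fin n) R) × (ℤ → Matrix (Fin n) (Fin n) R) =>
        fun s : ℤ => p.1 s * p.2 s * (p.1 (s + 1))⁻¹)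
      ({u | ∀ s : ℤ, IsUniUpper (u s)} ×ˢ {a | ∀ s : ℤ, IsSteinbergA (a s)})
      {m | ∀ s : ℤ, IsSteinbergM (m s)} := by
  obtain ⟨n, rfl⟩ := Nat.exists_eq_succ_of_ne_zero (by omega : n ≠ 0)
  exact stmt_10_general n R (Equiv.addRight 1)
end

section
/- Let R be a commutative ℂ-algebra, let m : ℕ → M(R) be a sequence, and let u₀ ∈ U(R). Then there exists a unique sequence u : ℕ → U(R) with u(0) = u₀ such that u(s)·m(s)·u(s+1)⁻¹ ∈ A(R) for every s ∈ ℕ. Moreover, if u and u′ are the sequences associated in this way to the same m but to two initial values u₀ and u₀′, then u(s) = u′(s) for all s ≥ n−1 (for SL(n) with the standard Coxeter element, the integers m_i equal n−i, so max_i m_i = n−1). -/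
/-!
Shift the rows of `w` up by one and append `(0, …, 0, 1)` as the last row. Up to the determinant,
`a` lies in `A` exactly when this shift turns `a` into the identity, and right multiplication by
`v ∈ U` commutes with the shift because the last row of `v` is `(0, …, 0, 1)`. Hence
`w * v⁻¹ ∈ A` forces `v` to be the shift of `w`; conversely the shift of `w ∈ M` lies in `U`, and
`U * M ⊆ M`. So the sequence is given by the recursion `u (s + 1) = shift (u s * m s)`. Row `i` of
`u (s + 1)` depends only on row `i + 1` of `u s`, so a change of `u 0`, which cannot affect its last
row, has moved out of the matrix after `n - 1` steps.
-/

open Matrix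

theorem mul_apply_eq_mul_of_upper {ι κ R : Type*} [Fintype ι] [LinearOrder ι]
    [NonUnitalNonAssocSemiring R] {u : Matrix ι ι R} {w : Matrix ι κ R} {i : ι} {j : κ}
    (hu : ∀ k < i, u i k = 0) (hw : ∀ k, i < k → w k j = 0) : (u * w) i j = u i i * w i j := by
  rw [mul_apply]
  refine Fintype.sum_eq_single i fun k hk => ?_
  rcases hk.lt_or_gt with hki | hik
  · rw [hu k hki, zero_mul]
  · rw [hw k hik, mul_zero]

section RowShift

variable {n : ℕ} {R : Type*}

/-- The matrix whose row `i` is row `i + 1` of `w`, and whose last row is that of the identity.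
It expresses the factor `v ∈ U(R)` with `w * v⁻¹ ∈ A(R)` in terms of `w ∈ M(R)`. -/
def rowShift [Zero R] [One R] (w : Matrix (Fin n) (Fin n) R) : Matrix (Fin n) (Fin n) R :=
  fun i => if h : (i : ℕ) + 1 < n then w ⟨i + 1, h⟩ else (1 : Matrix (Fin n) (Fin n) R) i

theorem rowShift_eq_row [Zero R] [One R] (w : Matrix (Fin n) (Fin n) R) {i i' : Fin n}
    (h : (i' : ℕ) = i + 1) : rowShift w i = w i' := by
  have hi : (i : ℕ) + 1 < n := h ▸ i'.isLt
  rw [rowShift, dif_pos hi]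
  exact congrArg w (Fin.ext h.symm)

theorem rowShift_last_row [Zero R] [One R] (w : Matrix (Fin n) (Fin n) R) {i : Fin n}
    (h : n ≤ (i : ℕ) + 1) : rowShift w i = (1 : Matrix (Fin n) (Fin n) R) i :=
  dif_neg h.not_gt

theorem rowShift_mul [NonAssocSemiring R] (w : Matrix (Fin n) (Fin n) R)
    {v : Matrix (Fin n) (Fin n) R}
    (hv : ∀ i : Fin n, n ≤ (i : ℕ) + 1 → v i = (1 : Matrix (Fin n) (Fin n) R) i) :
    rowShift (w * v) = rowShift w * v := by
  funext i
  rcases lt_or_ge ((i : ℕ) + 1) n with hi | hi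
  · rw [mul_apply_eq_vecMul, rowShift_eq_row w (i' := ⟨i + 1, hi⟩) rfl,
      rowShift_eq_row (w * v) (i' := ⟨i + 1, hi⟩) rfl, mul_apply_eq_vecMul]
  · rw [mul_apply_eq_vecMul, rowShift_last_row w hi, rowShift_last_row (w * v) hi,
      ← mul_apply_eq_vecMul, one_mul, hv i hi]

theorem det_of_rowShift_eq_one [CommRing R] {a : Matrix (Fin (n + 1)) (Fin (n + 1)) R}
    (ha : rowShift a = 1) : a.det = (-1) ^ n * a 0 (Fin.last n) := by
  have row_succ (i : Fin n) : a i.succ = (1 : Matrix (Fin (n + 1)) (Fin (n + 1)) R) i.castSucc := by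
    rw [← ha, rowShift_eq_row a (i' := i.succ) (by simp)]
  have minor_eq_one : a.submatrix Fin.succ Fin.castSucc = 1 := by
    ext i j
    simp [row_succ, one_apply]
  rw [det_succ_column a (Fin.last n), Fin.sum_univ_succ]
  simp [row_succ, minor_eq_one, Fin.succAbove_zero, Fin.succAbove_last]

/-- The sequence with `u 0 = u₀` and `u (s + 1) = rowShift (u s * m s)`; for `m s ∈ M(R)` and
`u₀ ∈ U(R)` it is the one with `u s * m s * (u (s + 1))⁻¹ ∈ A(R)`. -/
def rowShiftSeq [NonAssocSemiring R] (m : ℕ → Matrix (Fin n) (Fin n) R)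
    (u₀ : Matrix (Fin n) (Fin n) R) : ℕ → Matrix (Fin n) (Fin n) R
  | 0 => u₀
  | s + 1 => rowShift (rowShiftSeq m u₀ s * m s)

theorem rowShiftSeq_row_eq [NonAssocSemiring R] (m : ℕ → Matrix (Fin n) (Fin n) R)
    {u₀ u₀' : Matrix (Fin n) (Fin n) R} (h₀ : ∀ i : Fin n, n ≤ (i : ℕ) + 1 → u₀ i = u₀' i)
    (s : ℕ) (i : Fin n) (hi : n ≤ (i : ℕ) + 1 + s) :
    rowShiftSeq m u₀ s i = rowShiftSeq m u₀' s i := by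
  induction s generalizing i with
  | zero => exact h₀ i hi
  | succ s ih =>
    rw [rowShiftSeq, rowShiftSeq]
    rcases lt_or_ge ((i : ℕ) + 1) n with hlt | hge
    · have next_row := ih ⟨i + 1, hlt⟩ (by simp only; omega)
      rw [rowShift_eq_row _ (i' := ⟨i + 1, hlt⟩) rfl, rowShift_eq_row _ (i' := ⟨i + 1, hlt⟩) rfl,
        mul_apply_eq_vecMul, mul_apply_eq_vecMul, next_row]
    · rw [rowShift_last_row _ hge, rowShift_last_row _ hge]

theorem rowShiftSeq_eq_of_le [NonAssocSemiring R] (m : ℕ → Matrix (Fin n) (Fin n) R)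
    {u₀ u₀' : Matrix (Fin n) (Fin n) R} (h₀ : ∀ i : Fin n, n ≤ (i : ℕ) + 1 → u₀ i = u₀' i)
    {s : ℕ} (hs : n - 1 ≤ s) : rowShiftSeq m u₀ s = rowShiftSeq m u₀' s :=
  funext fun i => rowShiftSeq_row_eq m h₀ s i (by omega)

end RowShift

section Steinberg

variable {n : ℕ} {R : Type*} [CommRing R]

theorem IsUniUpper.det_eq_one_s11 {u : Matrix (Fin n) (Fin n) R} (hu : IsUniUpper u) : u.det = 1 := by
  have upper : u.IsUpperTriangular := fun i j hij => hu.2 i j hij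
  rw [det_of_isUpperTriangular upper]
  exact Finset.prod_eq_one fun i _ => hu.1 i

theorem IsUniUpper.isUnit_det_s11 {u : Matrix (Fin n) (Fin n) R} (hu : IsUniUpper u) :
    IsUnit u.det :=
  hu.det_eq_one_s11 ▸ isUnit_one

theorem IsUniUpper.last_row {u : Matrix (Fin n) (Fin n) R} (hu : IsUniUpper u) (i : Fin n)
    (hi : n ≤ (i : ℕ) + 1) : u i = (1 : Matrix (Fin n) (Fin n) R) i := by
  funext j
  rcases eq_or_ne i j with rfl | hij
  · rw [hu.1, one_apply_eq]
  · rw [hu.2 i j (by omega), one_apply_ne hij]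

theorem IsUniUpper.mul_isSteinbergM {u m : Matrix (Fin n) (Fin n) R} (hu : IsUniUpper u)
    (hm : IsSteinbergM m) : IsSteinbergM (u * m) := by
  obtain ⟨hdet, hsub, hzero⟩ := hm
  have entry {i j : Fin n} (hij : (j : ℕ) + 1 ≤ i) : (u * m) i j = m i j := by
    rw [mul_apply_eq_mul_of_upper (fun k hk => hu.2 i k hk)
      (fun k hk => hzero k j (by omega)), hu.1, one_mul]
  refine ⟨by rw [det_mul, hu.det_eq_one_s11, hdet, one_mul], fun i j hij => ?_, fun i j hij => ?_⟩
  · rw [entry hij.ge, hsub i j hij]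
  · rw [entry hij.le, hzero i j hij]

theorem IsSteinbergM.isUniUpper_rowShift {w : Matrix (Fin n) (Fin n) R} (hw : IsSteinbergM w) :
    IsUniUpper (rowShift w) := by
  obtain ⟨-, hsub, hzero⟩ := hw
  refine ⟨fun i => ?_, fun i j hji => ?_⟩ <;> rcases lt_or_ge ((i : ℕ) + 1) n with hi | hi
  · rw [rowShift_eq_row w (i' := ⟨i + 1, hi⟩) rfl, hsub _ _ rfl]
  · rw [rowShift_last_row w hi, one_apply_eq]
  · rw [rowShift_eq_row w (i' := ⟨i + 1, hi⟩) rfl, hzero _ _ (Nat.succ_lt_succ hji)]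
  · rw [rowShift_last_row w hi, one_apply_ne (Fin.ne_of_gt hji)]

theorem IsSteinbergA.rowShift_eq_one {a : Matrix (Fin n) (Fin n) R} (ha : IsSteinbergA a) :
    rowShift a = 1 := by
  obtain ⟨-, hsub, hzero⟩ := ha
  funext i j
  rcases lt_or_ge ((i : ℕ) + 1) n with hi | hi
  · rw [rowShift_eq_row a (i' := ⟨i + 1, hi⟩) rfl]
    rcases eq_or_ne i j with rfl | hij
    · rw [hsub _ _ rfl, one_apply_eq]
    · rw [hzero _ _ (by simp) (by simp only; omega), one_apply_ne hij]
  · rw [rowShift_last_row a hi]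

theorem isSteinbergA_of_rowShift_eq_one {a : Matrix (Fin n) (Fin n) R} (hdet : a.det = 1)
    (ha : rowShift a = 1) : IsSteinbergA a := by
  have row {i i' : Fin n} (h : (i' : ℕ) = i + 1) : a i' = (1 : Matrix (Fin n) (Fin n) R) i := by
    rw [← ha, rowShift_eq_row a h]
  refine ⟨fun i j hi hj => ?_, fun i j hij => by rw [row hij, one_apply_eq], fun i j hi hij => ?_⟩
  · obtain ⟨k, rfl⟩ := Nat.exists_eq_succ_of_ne_zero i.pos.ne'
    obtain rfl : i = 0 := Fin.ext hi
    obtain rfl : j = Fin.last k := Fin.ext hj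
    rw [det_of_rowShift_eq_one ha] at hdet
    calc a 0 (Fin.last k) = (-1) ^ k * ((-1) ^ k * a 0 (Fin.last k)) := by
          rw [← mul_assoc, ← mul_pow, neg_one_mul, neg_neg, one_pow, one_mul]
      _ = (-1) ^ k := by rw [hdet, mul_one]
  · have hpred : (i : ℕ) = (i : ℕ) - 1 + 1 := by omega
    rw [row (i := ⟨i - 1, by omega⟩) hpred, one_apply_ne]
    rintro rfl
    exact hij hpred

theorem IsUniUpper.eq_rowShift {v w : Matrix (Fin n) (Fin n) R} (hv : IsUniUpper v)
    (ha : IsSteinbergA (w * v⁻¹)) : v = rowShift w := by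
  calc v = rowShift (w * v⁻¹) * v := by rw [ha.rowShift_eq_one, one_mul]
    _ = rowShift (w * v⁻¹ * v) := (rowShift_mul _ hv.last_row).symm
    _ = rowShift w := by rw [nonsing_inv_mul_cancel_right _ _ hv.isUnit_det_s11]

theorem IsSteinbergM.isSteinbergA_mul_inv_rowShift {w : Matrix (Fin n) (Fin n) R}
    (hw : IsSteinbergM w) : IsSteinbergA (w * (rowShift w)⁻¹) := by
  have hv := hw.isUniUpper_rowShift
  have cancel := nonsing_inv_mul_cancel_right _ w hv.isUnit_det_s11
  apply isSteinbergA_of_rowShift_eq_one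
  · calc (w * (rowShift w)⁻¹).det = (w * (rowShift w)⁻¹ * rowShift w).det := by
          rw [det_mul _ (rowShift w), hv.det_eq_one_s11, mul_one]
      _ = 1 := by rw [cancel, hw.1]
  · calc rowShift (w * (rowShift w)⁻¹)
        = rowShift (w * (rowShift w)⁻¹) * rowShift w * (rowShift w)⁻¹ :=
          (mul_nonsing_inv_cancel_right _ _ hv.isUnit_det_s11).symm
      _ = rowShift w * (rowShift w)⁻¹ := by rw [← rowShift_mul _ hv.last_row, cancel]
      _ = 1 := mul_nonsing_inv _ hv.isUnit_det_s11

theorem isUniUpper_rowShiftSeq {m : ℕ → Matrix (Fin n) (Fin n) R} (hm : ∀ s, IsSteinbergM (m s))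
    {u₀ : Matrix (Fin n) (Fin n) R} (hu₀ : IsUniUpper u₀) (s : ℕ) :
    IsUniUpper (rowShiftSeq m u₀ s) := by
  induction s with
  | zero => exact hu₀
  | succ s ih => exact (ih.mul_isSteinbergM (hm s)).isUniUpper_rowShift

theorem isSteinbergA_rowShiftSeq {m : ℕ → Matrix (Fin n) (Fin n) R} (hm : ∀ s, IsSteinbergM (m s))
    {u₀ : Matrix (Fin n) (Fin n) R} (hu₀ : IsUniUpper u₀) (s : ℕ) :
    IsSteinbergA (rowShiftSeq m u₀ s * m s * (rowShiftSeq m u₀ (s + 1))⁻¹) :=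
  ((isUniUpper_rowShiftSeq hm hu₀ s).mul_isSteinbergM (hm s)).isSteinbergA_mul_inv_rowShift

theorem eq_rowShiftSeq {m u : ℕ → Matrix (Fin n) (Fin n) R} (hu : ∀ s, IsUniUpper (u (s + 1)))
    (hA : ∀ s, IsSteinbergA (u s * m s * (u (s + 1))⁻¹)) : u = rowShiftSeq m (u 0) := by
  funext s
  induction s with
  | zero => rfl
  | succ s ih => rw [(hu s).eq_rowShift (hA s), ih, rowShiftSeq]

end Steinberg

theorem stmt_11_general (n : ℕ) (R : Type*) [CommRing R]
    (m : ℕ → Matrix (Fin n) (Fin n) R) (hm : ∀ s : ℕ, IsSteinbergM (m s)) :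
    (∀ u₀ : Matrix (Fin n) (Fin n) R, IsUniUpper u₀ →
      ∃! u : ℕ → Matrix (Fin n) (Fin n) R,
        (∀ s : ℕ, IsUniUpper (u s)) ∧ u 0 = u₀ ∧
        ∀ s : ℕ, IsSteinbergA (u s * m s * (u (s + 1))⁻¹)) ∧
    (∀ u u' : ℕ → Matrix (Fin n) (Fin n) R,
      (∀ s : ℕ, IsUniUpper (u s)) → (∀ s : ℕ, IsUniUpper (u' s)) →
      (∀ s : ℕ, IsSteinbergA (u s * m s * (u (s + 1))⁻¹)) →
      (∀ s : ℕ, IsSteinbergA (u' s * m s * (u' (s + 1))⁻¹)) →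
      ∀ s : ℕ, n - 1 ≤ s → u s = u' s) := by
  refine ⟨fun u₀ hu₀ => ?_, fun u u' hu hu' hA hA' s hs => ?_⟩
  · refine ⟨rowShiftSeq m u₀,
      ⟨isUniUpper_rowShiftSeq hm hu₀, rfl, isSteinbergA_rowShiftSeq hm hu₀⟩, ?_⟩
    rintro u ⟨hu, rfl, hA⟩
    exact eq_rowShiftSeq (fun s => hu (s + 1)) hA
  · have last_row_eq (i : Fin n) (hi : n ≤ (i : ℕ) + 1) : u 0 i = u' 0 i := by
      rw [(hu 0).last_row i hi, (hu' 0).last_row i hi]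
    rw [eq_rowShiftSeq (fun s => hu (s + 1)) hA, eq_rowShiftSeq (fun s => hu' (s + 1)) hA']
    exact rowShiftSeq_eq_of_le m last_row_eq hs

/-- given `m : ℕ → M(R)` over a commutative `ℂ`-algebra `R` and `u₀ ∈ U(R)`,
there is a unique sequence `u : ℕ → U(R)` with `u(0) = u₀` and `u(s)·m(s)·u(s+1)⁻¹ ∈ A(R)`
for every `s ∈ ℕ`; moreover two such sequences attached to the same `m` (but possibly
different initial values) agree in all components `s ≥ n − 1`. -/
theorem stmt_11 (n : ℕ) (hn : 2 ≤ n) (R : Type*) [CommRing R] [Algebra ℂ R]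
    (m : ℕ → Matrix (Fin n) (Fin n) R) (hm : ∀ s : ℕ, IsSteinbergM (m s)) :
    (∀ u₀ : Matrix (Fin n) (Fin n) R, IsUniUpper u₀ →
      ∃! u : ℕ → Matrix (Fin n) (Fin n) R,
        (∀ s : ℕ, IsUniUpper (u s)) ∧ u 0 = u₀ ∧
        ∀ s : ℕ, IsSteinbergA (u s * m s * (u (s + 1))⁻¹)) ∧
    (∀ u u' : ℕ → Matrix (Fin n) (Fin n) R,
      (∀ s : ℕ, IsUniUpper (u s)) → (∀ s : ℕ, IsUniUpper (u' s)) →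
      (∀ s : ℕ, IsSteinbergA (u s * m s * (u (s + 1))⁻¹)) →
      (∀ s : ℕ, IsSteinbergA (u' s * m s * (u' (s + 1))⁻¹)) →
      ∀ s : ℕ, n - 1 ≤ s → u s = u' s) :=
  stmt_11_general n R m hm
end
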